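/- arXiv:1602.02203 — 2 statements merged into one kernel-verified Lean document; each statement's English description precedes it below -/
import Mathlib

section
/- If min(α11, α22) ≥ max(α12, α21), β1 ≥ 0 and β2 ≥ 0, then min(D1, D2) = α11 + α22 − max(α12 − β1, α21 − β2). -/
/-- The first sum GDoF bound of Theorem 1 of the paper:
    D1 = max(α11, α12) + max(α21 − α11 + β1, α22 − α12 + β1, 0). -/
def D1 (α11 α12 α21 α22 β1 : ℝ) : ℝ :=
  max α11 α12 + max (α21 - α11 + β1) (max (α22 - α12 + β1) 0)

/-- The second sum GDoF bound of Theorem 1 of the paper: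
    D2 = max(α21, α22) + max(α11 − α21 + β2, α12 − α22 + β2, 0). -/
def D2 (α11 α12 α21 α22 β2 : ℝ) : ℝ :=
  max α21 α22 + max (α11 - α21 + β2) (max (α12 - α22 + β2) 0)

/-!
Exchanging the two users turns `D2` into `D1`, so one evaluation suffices. When the first receiver's
direct channel dominates, `D1` is `α11` plus the largest of `α21 - α11 + β1`, `α22 - α12 + β1`
and `0`, and under weak cross channels the middle term wins: `D1 = α11 + α22 - (α12 - β1)`.
-/

theorem D2_eq_D1_swap (α11 α12 α21 α22 β : ℝ) :
    D2 α11 α12 α21 α22 β = D1 α22 α21 α12 α11 β := by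
  rw [D1, D2, max_comm α21 α22, max_left_comm]

theorem D1_eq_add_sub {α11 α12 α21 α22 β : ℝ} (hdirect : α12 ≤ α11)
    (hsum : α12 + α21 ≤ α11 + α22) (hβ : α12 - β ≤ α22) :
    D1 α11 α12 α21 α22 β = α11 + α22 - (α12 - β) := by
  have hcross : α21 - α11 + β ≤ α22 - α12 + β := by linarith
  have hnonneg : 0 ≤ α22 - α12 + β := by linarith
  rw [D1, max_eq_left hdirect, max_eq_left hnonneg, max_eq_right hcross]
  ring

theorem D2_eq_add_sub {α11 α12 α21 α22 β : ℝ} (hdirect : α21 ≤ α22)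
    (hsum : α12 + α21 ≤ α11 + α22) (hβ : α21 - β ≤ α11) :
    D2 α11 α12 α21 α22 β = α11 + α22 - (α21 - β) := by
  rw [D2_eq_D1_swap, D1_eq_add_sub hdirect (by linarith) hβ, add_comm α22]

theorem stmt_7_general {α11 α12 α21 α22 β1 β2 : ℝ}
    (hdirect1 : α12 ≤ α11) (hdirect2 : α21 ≤ α22)
    (hβ1 : α12 - β1 ≤ α22) (hβ2 : α21 - β2 ≤ α11) :
    min (D1 α11 α12 α21 α22 β1) (D2 α11 α12 α21 α22 β2) =
      α11 + α22 - max (α12 - β1) (α21 - β2) := by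
  have hsum : α12 + α21 ≤ α11 + α22 := add_le_add hdirect1 hdirect2
  rw [D1_eq_add_sub hdirect1 hsum hβ1, D2_eq_add_sub hdirect2 hsum hβ2, min_sub_sub_left]

/-- If min(α11, α22) ≥ max(α12, α21), β1 ≥ 0 and β2 ≥ 0, then
    min(D1, D2) = α11 + α22 − max(α12 − β1, α21 − β2). -/
theorem stmt_7 (α11 α12 α21 α22 β1 β2 : ℝ)
    (h : min α11 α22 ≥ max α12 α21) (hβ1 : β1 ≥ 0) (hβ2 : β2 ≥ 0) :
    min (D1 α11 α12 α21 α22 β1) (D2 α11 α12 α21 α22 β2) =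
      α11 + α22 - max (α12 - β1) (α21 - β2) := by
  simp only [ge_iff_le, le_min_iff, max_le_iff] at h
  obtain ⟨⟨hdirect1, hcross1⟩, hcross2, hdirect2⟩ := h
  exact stmt_7_general hdirect1 hdirect2 (by linarith) (by linarith)
end

section
/- Let A and B be real numbers with A ≠ B, and let n be an integer. For any real numbers g and g' satisfying ⌊A·g⌋ − ⌊B·g⌋ = n and ⌊A·g'⌋ − ⌊B·g'⌋ = n, it holds that |g − g'| < 2 / |A − B|. In particular, the set {g ∈ ℝ : ⌊A·g⌋ − ⌊B·g⌋ = n} is contained in an interval of length at most 2 / |A − B|. -/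
/-!
Since `x - ⌊x⌋` and `y - ⌊y⌋` both lie in `[0, 1)`, the integer `⌊x⌋ - ⌊y⌋` is within distance `1`
of `x - y`. With `x = A * g` and `y = B * g`, the condition `⌊A * g⌋ - ⌊B * g⌋ = n` puts
`(A - B) * g` within distance `1` of `n`, so `g` lies within `1 / |A - B|` of the centre
`n / (A - B)`.
-/

theorem abs_sub_sub_floor_sub_floor_lt_one {R : Type*} [Ring R] [LinearOrder R]
    [IsStrictOrderedRing R] [FloorRing R] (x y : R) :
    |x - y - ((⌊x⌋ - ⌊y⌋ : ℤ) : R)| < 1 := by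
  have fract_sub_fract : x - y - ((⌊x⌋ - ⌊y⌋ : ℤ) : R) = Int.fract x - Int.fract y := by
    rw [Int.cast_sub, sub_sub_sub_comm, Int.self_sub_floor, Int.self_sub_floor]
  rw [fract_sub_fract]
  exact abs_sub_lt_of_nonneg_of_lt (Int.fract_nonneg x) (Int.fract_lt_one x)
    (Int.fract_nonneg y) (Int.fract_lt_one y)

section Field

variable {K : Type*} [Field K] [LinearOrder K] [IsStrictOrderedRing K]

theorem abs_sub_div_lt_div_abs_iff {a : K} (ha : a ≠ 0) (b x r : K) :
    |x - b / a| < r / |a| ↔ |a * x - b| < r := by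
  rw [lt_div_iff₀' (abs_pos.mpr ha), ← abs_mul, mul_sub, mul_div_cancel₀ b ha]

variable [FloorRing K] {A B : K}

theorem abs_sub_div_lt_of_floor_mul_sub_floor_mul_eq (hAB : A ≠ B) {n : ℤ} {g : K}
    (hg : ⌊A * g⌋ - ⌊B * g⌋ = n) : |g - n / (A - B)| < 1 / |A - B| := by
  rw [abs_sub_div_lt_div_abs_iff (sub_ne_zero.mpr hAB), sub_mul, ← hg]
  exact abs_sub_sub_floor_sub_floor_lt_one (A * g) (B * g)

theorem stmt_14_general (hAB : A ≠ B) (n : ℤ) :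
    (∀ g g' : K, ⌊A * g⌋ - ⌊B * g⌋ = n → ⌊A * g'⌋ - ⌊B * g'⌋ = n →
      |g - g'| < 2 / |A - B|) ∧
    ∃ a b : K, b - a ≤ 2 / |A - B| ∧
      {g : K | ⌊A * g⌋ - ⌊B * g⌋ = n} ⊆ Set.Icc a b := by
  have two_radii : 1 / |A - B| + 1 / |A - B| = 2 / |A - B| := by
    rw [← add_div, one_add_one_eq_two]
  refine ⟨fun g g' hg hg' ↦ ?_, n / (A - B) - 1 / |A - B|, n / (A - B) + 1 / |A - B|, ?_,
    fun g hg ↦ ?_⟩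
  · have hg_near := abs_sub_div_lt_of_floor_mul_sub_floor_mul_eq hAB hg
    have hg'_near := abs_sub_div_lt_of_floor_mul_sub_floor_mul_eq hAB hg'
    calc |g - g'| ≤ |g - n / (A - B)| + |n / (A - B) - g'| := abs_sub_le _ _ _
      _ = |g - n / (A - B)| + |g' - n / (A - B)| := by rw [abs_sub_comm g']
      _ < 1 / |A - B| + 1 / |A - B| := add_lt_add hg_near hg'_near
      _ = 2 / |A - B| := two_radii
  · rw [add_sub_sub_cancel, two_radii]
  · rw [← Set.mem_Icc_iff_abs_le, abs_sub_comm]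
    exact (abs_sub_div_lt_of_floor_mul_sub_floor_mul_eq hAB hg).le

end Field

/-- If A ≠ B and ⌊A·g⌋ − ⌊B·g⌋ = n = ⌊A·g'⌋ − ⌊B·g'⌋, then
    |g − g'| < 2 / |A − B|; in particular the set of such g is contained
    in an interval of length at most 2 / |A − B|. -/
theorem stmt_14 (A B : ℝ) (hAB : A ≠ B) (n : ℤ) :
    (∀ g g' : ℝ, ⌊A * g⌋ - ⌊B * g⌋ = n → ⌊A * g'⌋ - ⌊B * g'⌋ = n →
      |g - g'| < 2 / |A - B|) ∧
    ∃ a b : ℝ, b - a ≤ 2 / |A - B| ∧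
      {g : ℝ | ⌊A * g⌋ - ⌊B * g⌋ = n} ⊆ Set.Icc a b :=
  stmt_14_general hAB n
end
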